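/- Let G be a finite graph with symmetric edge weights and Ω a finite subset of vertices. For θ ∈ [0,1) and p = 2/θ ∈ [2,∞] (with p = ∞ when θ = 0), the Dirichlet-to-Neumann operator satisfies ‖Λ‖_{p,p} ≤ 2^{1−θ}; that is, for every φ : δΩ → ℝ, ‖Λφ‖_{ℓ^p(δΩ,m)} ≤ 2^{1−θ} ‖φ‖_{ℓ^p(δΩ,m)}. -/

import Mathlib

open scoped Classical
open Finset

variable {V : Type*} [Fintype V]

/-- The vertex boundary δΩ of a finite set Ω of vertices. -/
noncomputable def bdry (μ : V → V → ℝ) (Ω : Finset V) : Finset V :=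
  Finset.univ.filter fun x => x ∉ Ω ∧ ∃ y ∈ Ω, 0 < μ x y

/-- Ω̄ = Ω ∪ δΩ. -/
noncomputable def clos (μ : V → V → ℝ) (Ω : Finset V) : Finset V :=
  Ω ∪ bdry μ Ω

/-- The vertex measure m on Ω̄. -/
noncomputable def vm (μ : V → V → ℝ) (Ω : Finset V) (x : V) : ℝ :=
  if x ∈ Ω then ∑ y, μ x y else ∑ y ∈ Ω, μ x y

/-- m(B) = Σ_{x ∈ B} m_x. -/
noncomputable def msum (μ : V → V → ℝ) (Ω : Finset V) (B : Finset V) : ℝ :=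
  ∑ x ∈ B, vm μ Ω x

/-- Sum over the edges e = {x,y} of E(Ω,Ω̄) of μ_{xy} · F x y (for symmetric F). -/
noncomputable def edgeSum (μ : V → V → ℝ) (Ω : Finset V) (F : V → V → ℝ) : ℝ :=
  (∑ x ∈ Ω, ∑ y ∈ Ω, μ x y * F x y) / 2 +
    ∑ x ∈ Ω, ∑ y ∈ bdry μ Ω, μ x y * F x y

/-- Dirichlet energy D_Ω(f). -/
noncomputable def dirichlet (μ : V → V → ℝ) (Ω : Finset V) (f : V → ℝ) : ℝ :=
  edgeSum μ Ω fun x y => (f x - f y) ^ 2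

/-- Dirichlet form D_Ω(f,g). -/
noncomputable def dform (μ : V → V → ℝ) (Ω : Finset V) (f g : V → ℝ) : ℝ :=
  edgeSum μ Ω fun x y => (f x - f y) * (g x - g y)

/-- μ(∂_Ω A): total weight of the edges of E(Ω,Ω̄) with exactly one endpoint in A. -/
noncomputable def cut (μ : V → V → ℝ) (Ω : Finset V) (A : Finset V) : ℝ :=
  edgeSum μ Ω fun x y => if (x ∈ A) ↔ (y ∈ A) then 0 else 1

/-- The graph Laplacian Δf(x) (used for x ∈ Ω). -/
noncomputable def lap (μ : V → V → ℝ) (Ω : Finset V) (f : V → ℝ) (x : V) : ℝ :=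
  (∑ y, μ x y * (f y - f x)) / vm μ Ω x

/-- The outward normal derivative ∂f/∂n(z) (used for z ∈ δΩ). -/
noncomputable def nderiv (μ : V → V → ℝ) (Ω : Finset V) (f : V → ℝ) (z : V) : ℝ :=
  (∑ x ∈ Ω, μ z x * (f z - f x)) / vm μ Ω z

/-- f is harmonic on Ω. -/
def IsHarmonic (μ : V → V → ℝ) (Ω : Finset V) (u : V → ℝ) : Prop :=
  ∀ x ∈ Ω, lap μ Ω u x = 0

/-- Adjacency in the graph Ω̃ = (Ω̄, E(Ω,Ω̄)). -/
def tilAdj (μ : V → V → ℝ) (Ω : Finset V) (x y : V) : Prop :=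
  0 < μ x y ∧ (x ∈ Ω ∨ y ∈ Ω)

/-- The graph Ω̃ is connected. -/
def TilConnected (μ : V → V → ℝ) (Ω : Finset V) : Prop :=
  ∀ x ∈ clos μ Ω, ∀ y ∈ clos μ Ω, Relation.ReflTransGen (tilAdj μ Ω) x y

/-- λ₁(Ω): the first nontrivial eigenvalue of the Dirichlet-to-Neumann operator,
characterized by its Rayleigh quotient. -/
noncomputable def lambda1 (μ : V → V → ℝ) (Ω : Finset V) : ℝ :=
  sInf { r : ℝ | ∃ u : V → ℝ, IsHarmonic μ Ω u ∧
    (∑ x ∈ bdry μ Ω, u x ^ 2 * vm μ Ω x) = 1 ∧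
    (∑ x ∈ bdry μ Ω, u x * vm μ Ω x) = 0 ∧
    r = dirichlet μ Ω u }

/-- The Escobar-type Cheeger constant h_E(Ω̃). -/
noncomputable def hE (μ : V → V → ℝ) (Ω : Finset V) : ℝ :=
  sInf { r : ℝ | ∃ A : Finset V, A ⊆ clos μ Ω ∧
    0 < msum μ Ω (A ∩ bdry μ Ω) ∧
    msum μ Ω (A ∩ bdry μ Ω) ≤ msum μ Ω (bdry μ Ω) / 2 ∧
    r = cut μ Ω A / msum μ Ω (A ∩ bdry μ Ω) }

/-- The Jammes-type Cheeger constant h_J(Ω̃). -/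
noncomputable def hJ (μ : V → V → ℝ) (Ω : Finset V) : ℝ :=
  sInf { r : ℝ | ∃ A : Finset V, A ⊆ clos μ Ω ∧
    (A ∩ bdry μ Ω).Nonempty ∧
    msum μ Ω A ≤ msum μ Ω (clos μ Ω) / 2 ∧
    r = cut μ Ω A / msum μ Ω (A ∩ bdry μ Ω) }

/-- The classical Cheeger constant h(Ω̃). -/
noncomputable def cheeger (μ : V → V → ℝ) (Ω : Finset V) : ℝ :=
  sInf { r : ℝ | ∃ A : Finset V, A ⊆ clos μ Ω ∧ A.Nonempty ∧
    msum μ Ω A ≤ msum μ Ω (clos μ Ω) / 2 ∧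
    r = cut μ Ω A / msum μ Ω A }

/-!
Each bound comes from one inequality for a harmonic `u`: for every monotone `ψ`,
`∑_{z ∈ δΩ} ∑_{x ∈ Ω} μ z x (u z - u x) ψ (u x) ≥ 0`. Indeed, by harmonicity this flux equals
`½ ∑_{x, y ∈ Ω} μ x y (u x - u y) (ψ (u x) - ψ (u y))`.

For `p ≥ 2` this replaces Riesz–Thorin interpolation. Let `ψ b = |b| ^ (p - 2) * b`, so that `p ψ`
is the derivative of `|·| ^ p`. The strong monotonicity `ψ (a - b) ≤ 2 ^ (p - 2) (ψ a - ψ b)` for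
`b ≤ a` integrates to the uniform convexity estimate
`|a - b| ^ p ≤ 2 ^ (p - 2) (|a| ^ p - |b| ^ p - p ψ b (a - b))`. Taking `a = u z`, `b = u x` and
summing, the last term has a favourable sign, while Jensen's inequality at each boundary vertex
bounds `‖Λu‖_p ^ p` by `∑ μ z x |u z - u x| ^ p`.

For `p = ∞`, the choice `ψ b = max (b - C) 0` gives the maximum principle.
-/

section SignedPower

/-- The odd extension `sign t * |t| ^ r` of the power function `t ^ r` to the real line, for
`r > 0`. It is encoded so that `p * signedRpow (p - 1)` is the derivative of `|·| ^ p`. -/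
noncomputable def signedRpow (r t : ℝ) : ℝ :=
  |t| ^ (r - 1) * t

variable {p r a b t : ℝ}

lemma signedRpow_neg : signedRpow r (-t) = -signedRpow r t := by
  simp only [signedRpow, abs_neg, mul_neg]

lemma signedRpow_of_nonneg (hr : r ≠ 0) (ht : 0 ≤ t) : signedRpow r t = t ^ r := by
  rw [signedRpow, abs_of_nonneg ht, ← Real.rpow_add_one' ht (by simpa), sub_add_cancel]

lemma signedRpow_of_nonpos (hr : r ≠ 0) (ht : t ≤ 0) : signedRpow r t = -(-t) ^ r := by
  rw [← signedRpow_of_nonneg hr (neg_nonneg.2 ht), signedRpow_neg, neg_neg]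

lemma hasDerivAt_abs_rpow_signedRpow (hp : 1 < p) (t : ℝ) :
    HasDerivAt (fun s : ℝ ↦ |s| ^ p) (p * signedRpow (p - 1) t) t := by
  simpa only [signedRpow, sub_sub, one_add_one_eq_two, mul_assoc] using hasDerivAt_abs_rpow t hp

lemma add_rpow_le_two_rpow_mul (hr : 1 ≤ r) (ha : 0 ≤ a) (hb : 0 ≤ b) :
    (a + b) ^ r ≤ 2 ^ (r - 1) * (a ^ r + b ^ r) := by
  lift a to NNReal using ha
  lift b to NNReal using hb
  exact_mod_cast NNReal.rpow_add_le_mul_rpow_add_rpow a b hr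

lemma signedRpow_sub_le (hr : 1 ≤ r) (hba : b ≤ a) :
    signedRpow r (a - b) ≤ 2 ^ (r - 1) * (signedRpow r a - signedRpow r b) := by
  have hr₀ : r ≠ 0 := by positivity
  have same_sign : ∀ {c d : ℝ}, 0 ≤ d → d ≤ c → (c - d) ^ r ≤ 2 ^ (r - 1) * (c ^ r - d ^ r) := by
    intro c d hd hdc
    have superadd : (c - d) ^ r ≤ c ^ r - d ^ r := by
      have := Real.add_rpow_le_rpow_add (sub_nonneg.2 hdc) hd hr
      rw [sub_add_cancel] at this
      linarith
    have hmono : d ^ r ≤ c ^ r := by gcongr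
    exact superadd.trans <| le_mul_of_one_le_left (sub_nonneg.2 hmono) <|
      Real.one_le_rpow one_le_two (sub_nonneg.2 hr)
  rw [signedRpow_of_nonneg hr₀ (sub_nonneg.2 hba)]
  rcases le_total 0 b with hb | hb
  · rw [signedRpow_of_nonneg hr₀ hb, signedRpow_of_nonneg hr₀ (hb.trans hba)]
    exact same_sign hb hba
  rw [signedRpow_of_nonpos hr₀ hb]
  rcases le_total 0 a with ha | ha
  · rw [signedRpow_of_nonneg hr₀ ha]
    simpa only [sub_neg_eq_add, sub_eq_add_neg a b] using
      add_rpow_le_two_rpow_mul hr ha (neg_nonneg.2 hb)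
  · rw [signedRpow_of_nonpos hr₀ ha, neg_sub_neg, ← neg_sub_neg b a]
    exact same_sign (neg_nonneg.2 ha) (neg_le_neg hba)

lemma signedRpow_monotone (hr : 1 ≤ r) : Monotone (signedRpow r) := by
  intro b a hba
  have hsub : 0 ≤ signedRpow r (a - b) :=
    mul_nonneg (Real.rpow_nonneg (abs_nonneg _) _) (sub_nonneg.2 hba)
  exact sub_nonneg.1 <|
    nonneg_of_mul_nonneg_right (hsub.trans (signedRpow_sub_le hr hba)) (by positivity)

lemma convexOn_abs_rpow (hp : 1 ≤ p) : ConvexOn ℝ Set.univ fun t : ℝ ↦ |t| ^ p := by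
  have himage : (norm : ℝ → ℝ) '' Set.univ = Set.Ici 0 := by
    rw [Set.image_univ]
    exact Set.eq_of_subset_of_subset (Set.range_subset_iff.2 norm_nonneg)
      fun t ht ↦ ⟨t, Real.norm_of_nonneg ht⟩
  exact ConvexOn.comp (himage ▸ convexOn_rpow hp) convexOn_univ_norm
    (himage ▸ Real.monotoneOn_rpow_Ici_of_exponent_nonneg (by positivity))

lemma abs_sub_rpow_le (hp : 2 ≤ p) (a b : ℝ) :
    |a - b| ^ p ≤ 2 ^ (p - 2) * (|a| ^ p - |b| ^ p - p * signedRpow (p - 1) b * (a - b)) := by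
  wlog hba : b ≤ a generalizing a b
  · have h := this (-a) (-b) (neg_le_neg (not_le.1 hba).le)
    rw [signedRpow_neg, abs_neg, abs_neg, neg_sub_neg, abs_sub_comm] at h
    linarith
  let gap : ℝ → ℝ := fun s ↦
    2 ^ (p - 2) * (|s| ^ p - |b| ^ p - p * signedRpow (p - 1) b * (s - b)) - |s - b| ^ p
  have hgap : ∀ s, HasDerivAt gap (p * (2 ^ (p - 2) *
      (signedRpow (p - 1) s - signedRpow (p - 1) b) - signedRpow (p - 1) (s - b))) s := by
    intro s
    have hpow := hasDerivAt_abs_rpow_signedRpow (p := p) (by linarith)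
    have hlin := ((hasDerivAt_id s).sub_const b).const_mul (p * signedRpow (p - 1) b)
    exact (((((hpow s).sub_const (|b| ^ p)).sub hlin).const_mul (2 ^ (p - 2))).sub
      ((hpow (s - b)).comp_sub_const s b)).congr_deriv (by ring)
  have hmono : MonotoneOn gap (Set.Ici b) := by
    refine monotoneOn_of_hasDerivWithinAt_nonneg (convex_Ici b)
      (fun s _ ↦ (hgap s).continuousAt.continuousWithinAt)
      (fun s _ ↦ (hgap s).hasDerivWithinAt) fun s hs ↦ ?_
    have h := signedRpow_sub_le (r := p - 1) (by linarith) (interior_subset hs : b ≤ s)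
    rw [show p - 1 - 1 = p - 2 by ring] at h
    exact mul_nonneg (by linarith) (sub_nonneg.2 h)
  have hgap_b : gap b = 0 := by
    simp [gap, Real.zero_rpow (by linarith : p ≠ 0)]
  have h : 0 ≤ gap a := hgap_b ▸ hmono Set.self_mem_Ici hba hba
  exact sub_nonneg.1 h

end SignedPower

lemma sum_sum_mul_sub_mul_nonneg {ι : Type*} {w : ι → ι → ℝ} (hsym : ∀ i j, w i j = w j i)
    (hnn : ∀ i j, 0 ≤ w i j) {f g : ι → ℝ} (hfg : Monovary f g) (s : Finset ι) :
    0 ≤ ∑ i ∈ s, ∑ j ∈ s, w i j * (f i - f j) * g i := by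
  have hswap : ∑ i ∈ s, ∑ j ∈ s, w i j * (f i - f j) * g i =
      ∑ i ∈ s, ∑ j ∈ s, -(w i j * (f i - f j) * g j) := by
    rw [sum_comm]
    refine sum_congr rfl fun i _ ↦ sum_congr rfl fun j _ ↦ ?_
    rw [hsym j i]
    ring
  have hsum : 0 ≤ ∑ i ∈ s, ∑ j ∈ s, (w i j * (f i - f j) * g i + -(w i j * (f i - f j) * g j)) := by
    refine sum_nonneg fun i _ ↦ sum_nonneg fun j _ ↦ ?_
    have := mul_nonneg (hnn i j) (hfg.sub_mul_sub_nonneg j i)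
    linarith
  simp only [sum_add_distrib, ← hswap] at hsum
  linarith

section Graph

variable {μ : V → V → ℝ} {Ω : Finset V} {u : V → ℝ} {x z : V} {C p : ℝ}

lemma mem_bdry : z ∈ bdry μ Ω ↔ z ∉ Ω ∧ ∃ y ∈ Ω, 0 < μ z y := by
  simp only [bdry, mem_filter, mem_univ, true_and]

lemma vm_of_mem_bdry (hz : z ∈ bdry μ Ω) : vm μ Ω z = ∑ x ∈ Ω, μ z x :=
  if_neg (mem_bdry.1 hz).1

lemma vm_pos_of_mem_bdry (hnn : ∀ x y, 0 ≤ μ x y) (hz : z ∈ bdry μ Ω) : 0 < vm μ Ω z := by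
  rw [vm_of_mem_bdry hz]
  exact sum_pos' (fun x _ ↦ hnn z x) (mem_bdry.1 hz).2

lemma sum_mul_eq_sum_add_sum_bdry (hsym : ∀ x y, μ x y = μ y x) (hnn : ∀ x y, 0 ≤ μ x y)
    (hx : x ∈ Ω) (f : V → ℝ) :
    ∑ y, μ x y * f y = ∑ y ∈ Ω, μ x y * f y + ∑ y ∈ bdry μ Ω, μ x y * f y := by
  have hdisj : Disjoint Ω (bdry μ Ω) :=
    disjoint_right.2 fun _ hy ↦ (mem_bdry.1 hy).1
  rw [← sum_union hdisj]
  refine (sum_subset (subset_univ _) fun y _ hy ↦ ?_).symm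
  obtain ⟨hyΩ, hyb⟩ := notMem_union.1 hy
  have hμ : μ x y = 0 := by
    by_contra h
    exact hyb (mem_bdry.2 ⟨hyΩ, x, hx, hsym x y ▸ (hnn x y).lt_of_ne' h⟩)
  rw [hμ, zero_mul]

lemma map_nderiv_mul_vm_le (hnn : ∀ x y, 0 ≤ μ x y) {Φ : ℝ → ℝ} (hΦ : ConvexOn ℝ Set.univ Φ)
    (u : V → ℝ) (hz : z ∈ bdry μ Ω) :
    Φ (nderiv μ Ω u z) * vm μ Ω z ≤ ∑ x ∈ Ω, μ z x * Φ (u z - u x) := by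
  have hpos := vm_pos_of_mem_bdry hnn hz
  have jensen := hΦ.map_centerMass_le (t := Ω) (w := μ z) (p := fun x ↦ u z - u x)
    (fun x _ ↦ hnn z x) (vm_of_mem_bdry hz ▸ hpos) (fun _ _ ↦ Set.mem_univ _)
  simp only [centerMass, ← vm_of_mem_bdry hz, smul_eq_mul, Function.comp_apply,
    inv_mul_eq_div] at jensen
  exact (le_div_iff₀ hpos).1 jensen

namespace IsHarmonic

lemma neg (hu : IsHarmonic μ Ω u) : IsHarmonic μ Ω (-u) := by
  intro x hx
  have h : lap μ Ω (-u) x = -lap μ Ω u x := by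
    simp only [lap, Pi.neg_apply, neg_sub_neg, ← neg_div, ← sum_neg_distrib, ← mul_neg, neg_sub]
  rw [h, hu x hx, neg_zero]

lemma sum_bdry_mul_sub (hsym : ∀ x y, μ x y = μ y x) (hnn : ∀ x y, 0 ≤ μ x y)
    (hu : IsHarmonic μ Ω u) (hx : x ∈ Ω) (hm : vm μ Ω x ≠ 0) :
    ∑ z ∈ bdry μ Ω, μ z x * (u z - u x) = ∑ y ∈ Ω, μ x y * (u x - u y) := by
  have hzero : ∑ y, μ x y * (u y - u x) = 0 := (div_eq_zero_iff.1 (hu x hx)).resolve_right hm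
  rw [sum_mul_eq_sum_add_sum_bdry hsym hnn hx fun y ↦ u y - u x, add_eq_zero_iff_neg_eq'] at hzero
  simp only [hsym _ x, ← neg_sub (u x), mul_neg, sum_neg_distrib] at hzero ⊢
  linarith

lemma bdry_flux_nonneg (hsym : ∀ x y, μ x y = μ y x) (hnn : ∀ x y, 0 ≤ μ x y)
    (hm : ∀ x ∈ Ω, vm μ Ω x ≠ 0) (hu : IsHarmonic μ Ω u) {ψ : ℝ → ℝ} (hψ : Monotone ψ) :
    0 ≤ ∑ z ∈ bdry μ Ω, ∑ x ∈ Ω, μ z x * (u z - u x) * ψ (u x) := by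
  have green : ∑ z ∈ bdry μ Ω, ∑ x ∈ Ω, μ z x * (u z - u x) * ψ (u x) =
      ∑ x ∈ Ω, ∑ y ∈ Ω, μ x y * (u x - u y) * ψ (u x) := by
    rw [sum_comm]
    refine sum_congr rfl fun x hx ↦ ?_
    rw [← sum_mul, ← sum_mul, hu.sum_bdry_mul_sub hsym hnn hx (hm x hx)]
  rw [green]
  exact sum_sum_mul_sub_mul_nonneg hsym hnn ((monovary_self u).comp_monotone_left hψ).symm Ω

lemma le_of_forall_bdry_le (hsym : ∀ x y, μ x y = μ y x) (hnn : ∀ x y, 0 ≤ μ x y)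
    (hm : ∀ x ∈ Ω, vm μ Ω x ≠ 0) (hu : IsHarmonic μ Ω u) (hC : ∀ z ∈ bdry μ Ω, u z ≤ C)
    (hz : z ∈ bdry μ Ω) (hx : x ∈ Ω) (hzx : μ z x ≠ 0) : u x ≤ C := by
  by_contra! hxC
  have hψ : Monotone fun t : ℝ ↦ max (t - C) 0 := fun s t hst ↦ by
    dsimp only
    gcongr
  have hterm : ∀ z ∈ bdry μ Ω, ∀ x ∈ Ω, μ z x * (u z - u x) * max (u x - C) 0 ≤ 0 := by
    intro z hz x _
    rcases le_total (u x) C with h | h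
    · rw [max_eq_right (sub_nonpos.2 h), mul_zero]
    · exact mul_nonpos_of_nonpos_of_nonneg (mul_nonpos_of_nonneg_of_nonpos (hnn z x)
        (sub_nonpos.2 ((hC z hz).trans h))) (le_max_right _ _)
  have hneg : μ z x * (u z - u x) * max (u x - C) 0 < 0 := by
    rw [max_eq_left (sub_pos.2 hxC).le]
    exact mul_neg_of_neg_of_pos (mul_neg_of_pos_of_neg ((hnn z x).lt_of_ne' hzx)
      (sub_neg.2 ((hC z hz).trans_lt hxC))) (sub_pos.2 hxC)
  exact (hu.bdry_flux_nonneg hsym hnn hm hψ).not_gt <|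
    sum_neg' (fun z hz ↦ sum_nonpos (hterm z hz))
      ⟨z, hz, sum_neg' (hterm z hz) ⟨x, hx, hneg⟩⟩

lemma abs_nderiv_le (hsym : ∀ x y, μ x y = μ y x) (hnn : ∀ x y, 0 ≤ μ x y)
    (hm : ∀ x ∈ Ω, vm μ Ω x ≠ 0) (hu : IsHarmonic μ Ω u) (hC : ∀ y ∈ bdry μ Ω, |u y| ≤ C)
    (hz : z ∈ bdry μ Ω) : |nderiv μ Ω u z| ≤ 2 * C := by
  have hdiff : ∀ x ∈ Ω, μ z x * |u z - u x| ≤ μ z x * (2 * C) := by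
    intro x hx
    rcases eq_or_ne (μ z x) 0 with h | h
    · simp only [h, zero_mul, le_refl]
    have hupper := hu.le_of_forall_bdry_le hsym hnn hm (fun y hy ↦ (abs_le.1 (hC y hy)).2) hz hx h
    have hlower := hu.neg.le_of_forall_bdry_le hsym hnn hm
      (fun y hy ↦ neg_le.1 (abs_le.1 (hC y hy)).1) hz hx h
    have hux : |u x| ≤ C := abs_le.2 ⟨neg_le.1 hlower, hupper⟩
    refine mul_le_mul_of_nonneg_left ?_ (hnn z x)
    linarith [abs_sub (u z) (u x), hC z hz]
  refine le_of_mul_le_mul_right ?_ (vm_pos_of_mem_bdry hnn hz)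
  calc |nderiv μ Ω u z| * vm μ Ω z
      ≤ ∑ x ∈ Ω, μ z x * |u z - u x| := map_nderiv_mul_vm_le hnn convexOn_univ_norm u hz
    _ ≤ ∑ x ∈ Ω, μ z x * (2 * C) := sum_le_sum hdiff
    _ = 2 * C * vm μ Ω z := by rw [← sum_mul, vm_of_mem_bdry hz, mul_comm]

lemma sum_mul_abs_sub_rpow_le (hsym : ∀ x y, μ x y = μ y x) (hnn : ∀ x y, 0 ≤ μ x y)
    (hm : ∀ x ∈ Ω, vm μ Ω x ≠ 0) (hu : IsHarmonic μ Ω u) (hp : 2 ≤ p) :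
    ∑ z ∈ bdry μ Ω, ∑ x ∈ Ω, μ z x * |u z - u x| ^ p ≤
      2 ^ (p - 2) * ∑ z ∈ bdry μ Ω, |u z| ^ p * vm μ Ω z := by
  have hflux := hu.bdry_flux_nonneg hsym hnn hm (signedRpow_monotone (r := p - 1) (by linarith))
  have hedge : ∀ z x, μ z x * |u z - u x| ^ p ≤ 2 ^ (p - 2) *
      (|u z| ^ p * μ z x - p * (μ z x * (u z - u x) * signedRpow (p - 1) (u x))) := by
    intro z x
    have hconv : |u z - u x| ^ p ≤
        2 ^ (p - 2) * (|u z| ^ p - p * signedRpow (p - 1) (u x) * (u z - u x)) := by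
      refine (abs_sub_rpow_le hp (u z) (u x)).trans ?_
      gcongr
      exact sub_le_self _ (by positivity)
    exact (mul_le_mul_of_nonneg_left hconv (hnn z x)).trans_eq (by ring)
  calc ∑ z ∈ bdry μ Ω, ∑ x ∈ Ω, μ z x * |u z - u x| ^ p
      ≤ ∑ z ∈ bdry μ Ω, ∑ x ∈ Ω, 2 ^ (p - 2) *
          (|u z| ^ p * μ z x - p * (μ z x * (u z - u x) * signedRpow (p - 1) (u x))) :=
        sum_le_sum fun z _ ↦ sum_le_sum fun x _ ↦ hedge z x
    _ = 2 ^ (p - 2) * (∑ z ∈ bdry μ Ω, |u z| ^ p * ∑ x ∈ Ω, μ z x -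
          p * ∑ z ∈ bdry μ Ω, ∑ x ∈ Ω, μ z x * (u z - u x) * signedRpow (p - 1) (u x)) := by
        simp only [← mul_sum, sum_sub_distrib]
    _ ≤ 2 ^ (p - 2) * ∑ z ∈ bdry μ Ω, |u z| ^ p * ∑ x ∈ Ω, μ z x := by
        gcongr
        exact sub_le_self _ (by positivity)
    _ = 2 ^ (p - 2) * ∑ z ∈ bdry μ Ω, |u z| ^ p * vm μ Ω z := by
        congr 1
        exact sum_congr rfl fun z hz ↦ by rw [vm_of_mem_bdry hz]

lemma sum_abs_nderiv_rpow_le (hsym : ∀ x y, μ x y = μ y x) (hnn : ∀ x y, 0 ≤ μ x y)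
    (hm : ∀ x ∈ Ω, vm μ Ω x ≠ 0) (hu : IsHarmonic μ Ω u) (hp : 2 ≤ p) :
    ∑ z ∈ bdry μ Ω, |nderiv μ Ω u z| ^ p * vm μ Ω z ≤
      2 ^ (p - 2) * ∑ z ∈ bdry μ Ω, |u z| ^ p * vm μ Ω z :=
  (sum_le_sum fun _ hz ↦ map_nderiv_mul_vm_le hnn (convexOn_abs_rpow (by linarith)) u hz).trans
    (hu.sum_mul_abs_sub_rpow_le hsym hnn hm hp)

end IsHarmonic

end Graph

/-- Corollary 3.3 (interpolation): for θ ∈ [0,1) and p = 2/θ (p = ∞ when θ = 0),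
‖Λφ‖_{ℓ^p(δΩ,m)} ≤ 2^{1−θ} ‖φ‖_{ℓ^p(δΩ,m)}. -/
theorem stmt_9 (μ : V → V → ℝ) (Ω : Finset V)
    (hsym : ∀ x y, μ x y = μ y x) (hnn : ∀ x y, 0 ≤ μ x y)
    (hm : ∀ x ∈ clos μ Ω, 0 < vm μ Ω x) :
    ∀ θ : ℝ, 0 ≤ θ → θ < 1 →
      ∀ u : V → ℝ, IsHarmonic μ Ω u →
        (θ = 0 → ∀ C : ℝ, (∀ y ∈ bdry μ Ω, |u y| ≤ C) →
          ∀ x ∈ bdry μ Ω, |nderiv μ Ω u x| ≤ 2 ^ ((1 : ℝ) - θ) * C) ∧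
        (0 < θ →
          (∑ x ∈ bdry μ Ω, |nderiv μ Ω u x| ^ ((2 : ℝ) / θ) * vm μ Ω x) ^ (θ / 2) ≤
            2 ^ ((1 : ℝ) - θ) *
              (∑ x ∈ bdry μ Ω, |u x| ^ ((2 : ℝ) / θ) * vm μ Ω x) ^ (θ / 2)) := by
  intro θ _ hθ₁ u hu
  have hmΩ : ∀ x ∈ Ω, vm μ Ω x ≠ 0 := fun x hx ↦ (hm x (mem_union_left _ hx)).ne'
  refine ⟨fun hθ C hC x hx ↦ ?_, fun hθ ↦ ?_⟩
  · rw [hθ, sub_zero, Real.rpow_one]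
    exact hu.abs_nderiv_le hsym hnn hmΩ hC hx
  · have hsum_nonneg : ∀ f : V → ℝ, 0 ≤ ∑ x ∈ bdry μ Ω, |f x| ^ (2 / θ) * vm μ Ω x := fun f ↦
      sum_nonneg fun x hx ↦
        mul_nonneg (Real.rpow_nonneg (abs_nonneg _) _) (vm_pos_of_mem_bdry hnn hx).le
    have hp : 2 ≤ 2 / θ := (le_div_iff₀ hθ).2 (by linarith)
    have hexp : (2 / θ - 2) * (θ / 2) = 1 - θ := by field_simp
    have hpow := Real.rpow_le_rpow (hsum_nonneg _) (hu.sum_abs_nderiv_rpow_le hsym hnn hmΩ hp)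
      (by positivity : 0 ≤ θ / 2)
    rwa [Real.mul_rpow (by positivity) (hsum_nonneg u), ← Real.rpow_mul zero_le_two, hexp] at hpow
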